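/- Let α₀ > 0, β₀ > 0 and λ > 0. For every sequence {(f_n, g_n)} in H¹(ℝ)×H¹(ℝ) satisfying lim_{n→∞} ∫_ℝ f_n² g_n dx = λ and lim_{n→∞} I(f_n, g_n) = M_λ, there exist a subsequence {(f_{n_k}, g_{n_k})}, a sequence of real numbers {y_k}, and a pair (φ,ψ) ∈ H¹(ℝ)×H¹(ℝ) with ∫_ℝ φ² ψ dx = λ and I(φ,ψ) = M_λ, such that f_{n_k}(· + y_k) → φ and g_{n_k}(· + y_k) → ψ strongly in H¹(ℝ), i.e. ‖f_{n_k}(·+y_k) − φ‖_{L²} + ‖f′_{n_k}(·+y_k) − φ′‖_{L²} → 0 and ‖g_{n_k}(·+y_k) − ψ‖_{L²} + ‖g′_{n_k}(·+y_k) − ψ′‖_{L²} → 0 as k → ∞. -/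

import Mathlib

/-!
Scaling a pair `(f, g)` by `s` multiplies the energy by `s²` and the constraint by `s³`. Hence the
definition of `M = Mfun α₀ β₀ lam` amounts to the sharp inequality `M³ (∫ f² g)² ≤ lam² I(f, g)³`
for all pairs, and the exponent `2/3` relating the two sides makes the problem strictly
subadditive.

Limits are taken in the space `WeakH1` of primitives of `L²` functions, since `InH1` asks for
differentiability at every point and is not closed under weak limits; the sharp inequality passes
to `WeakH1` through Steklov averages. Along a minimizing sequence `|g n|` cannot tend to zero
uniformly, as `∫ f² |g| ≤ sup |g| ∫ f²`, so translating by points where `|g n|` stays bounded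
below produces a weak limit `(φ, ψ)` with `ψ ≠ 0`. Energy and constraint split asymptotically into
the contributions of the limit and of the remainder. Applying the sharp inequality to both parts,
strict subadditivity leaves no energy in the remainder, which is strong convergence to a
minimizer.

The minimizer so found is only known to lie in `WeakH1`. By the first-order condition for the
sharp inequality it solves weakly the Euler–Lagrange system, whose right-hand side is continuous,
and the lemma of du Bois-Reymond makes it differentiable everywhere.
-/

open MeasureTheory Filter Topology

noncomputable section

/-- Membership in `H¹(ℝ)`: `f` is differentiable with `f` and `f'` square-integrable. -/
def InH1 (f : ℝ → ℝ) : Prop :=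
  Differentiable ℝ f ∧ Integrable (fun x => f x ^ 2) ∧ Integrable (fun x => deriv f x ^ 2)

/-- The functional `I(f,g) = ∫ (f'² + g'² + α₀ f² + β₀ g²)`. -/
def Ifun (α₀ β₀ : ℝ) (f g : ℝ → ℝ) : ℝ :=
  ∫ x : ℝ, (deriv f x ^ 2 + deriv g x ^ 2 + α₀ * f x ^ 2 + β₀ * g x ^ 2)

/-- The set of values `I(f,g)` over pairs in `H¹ × H¹` with `∫ f² g = lam`. -/
def IvalSet (α₀ β₀ lam : ℝ) : Set ℝ :=
  {m | ∃ f g : ℝ → ℝ, InH1 f ∧ InH1 g ∧ (∫ x : ℝ, f x ^ 2 * g x) = lam ∧ Ifun α₀ β₀ f g = m}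

/-- `M_lam`, the infimum of `I` subject to the constraint `∫ f² g = lam`. -/
def Mfun (α₀ β₀ lam : ℝ) : ℝ := sInf (IvalSet α₀ β₀ lam)

open Set
open scoped Convolution

section SquareIntegrable

variable {X : Type*} [MeasurableSpace X] {μ : Measure X} {u v : X → ℝ}

lemma integral_add_const_mul_sq (hu : MemLp u 2 μ) (hv : MemLp v 2 μ) (t : ℝ) :
    ∫ x, (u x + t * v x) ^ 2 ∂μ
      = (∫ x, u x ^ 2 ∂μ) + 2 * t * (∫ x, u x * v x ∂μ) + t ^ 2 * ∫ x, v x ^ 2 ∂μ := by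
  have huv : Integrable (fun x => 2 * t * (u x * v x)) μ := (hu.integrable_mul hv).const_mul _
  have hvv : Integrable (fun x => t ^ 2 * v x ^ 2) μ := hv.integrable_sq.const_mul _
  calc ∫ x, (u x + t * v x) ^ 2 ∂μ
      = ∫ x, (u x ^ 2 + 2 * t * (u x * v x) + t ^ 2 * v x ^ 2) ∂μ := by
        congr 1 with x; ring
    _ = _ := by
        rw [integral_add (hu.integrable_sq.fun_add huv) hvv, integral_add hu.integrable_sq huv,
          integral_const_mul, integral_const_mul]

lemma sq_integral_mul_le (hu : MemLp u 2 μ) (hv : MemLp v 2 μ) :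
    (∫ x, u x * v x ∂μ) ^ 2 ≤ (∫ x, u x ^ 2 ∂μ) * ∫ x, v x ^ 2 ∂μ := by
  have hdisc : discrim (∫ x, v x ^ 2 ∂μ) (2 * ∫ x, u x * v x ∂μ) (∫ x, u x ^ 2 ∂μ) ≤ 0 :=
    discrim_le_zero fun t => by
      have hnonneg : 0 ≤ ∫ x, (u x + t * v x) ^ 2 ∂μ := integral_nonneg fun _ => sq_nonneg _
      rw [integral_add_const_mul_sq hu hv] at hnonneg
      linarith
  unfold discrim at hdisc
  linarith

lemma sq_integral_le [IsFiniteMeasure μ] (hu : MemLp u 2 μ) :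
    (∫ x, u x ∂μ) ^ 2 ≤ μ.real univ * ∫ x, u x ^ 2 ∂μ := by
  have hcs := sq_integral_mul_le (memLp_const (1 : ℝ)) hu
  simpa only [one_mul, one_pow, integral_const, smul_eq_mul, mul_one] using hcs

lemma sq_intervalIntegral_le {v : ℝ → ℝ} (hv : MemLp v 2) {a b : ℝ} (hab : a ≤ b) :
    (∫ x in a..b, v x) ^ 2 ≤ (b - a) * ∫ x in a..b, v x ^ 2 := by
  have hcs := sq_integral_le (hv.restrict (Ioc a b))
  simpa only [intervalIntegral.integral_of_le hab, measureReal_restrict_apply MeasurableSet.univ,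
    univ_inter, Real.volume_real_Ioc_of_le hab] using hcs

lemma tendsto_integral_max_sub_sq_zero {h : X → ℝ} {z : ℕ → X → ℝ} (hh : MemLp h 2 μ)
    (hz : ∀ n, AEStronglyMeasurable (z n) μ)
    (hlim : ∀ᵐ x ∂μ, Tendsto (fun n => z n x) atTop (𝓝 0)) {δ : ℝ} (hδ : 0 < δ) :
    Tendsto (fun n => ∫ x, max (|h x * z n x| - δ * z n x ^ 2) 0 ∂μ) atTop (𝓝 0) := by
  have hmeas n : AEStronglyMeasurable (fun x => max (|h x * z n x| - δ * z n x ^ 2) 0) μ :=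
    ((hh.aestronglyMeasurable.mul (hz n)).norm.sub (((hz n).pow 2).const_mul δ)).sup
      aestronglyMeasurable_const
  have hbound n x : ‖max (|h x * z n x| - δ * z n x ^ 2) 0‖ ≤ (4 * δ)⁻¹ * h x ^ 2 := by
    rw [Real.norm_of_nonneg (le_max_right _ _), inv_mul_eq_div]
    refine max_le ?_ (by positivity)
    rw [le_div_iff₀ (by positivity), abs_mul]
    have hsq := sq_nonneg (|h x| - 2 * δ * |z n x|)
    rw [← sq_abs (h x), ← sq_abs (z n x)]
    linarith
  suffices hzero : ∀ᵐ x ∂μ,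
      Tendsto (fun n => max (|h x * z n x| - δ * z n x ^ 2) 0) atTop (𝓝 0) by
    simpa only [integral_zero] using tendsto_integral_of_dominated_convergence _ hmeas
      (hh.integrable_sq.const_mul _) (fun n => ae_of_all _ (hbound n)) hzero
  filter_upwards [hlim] with x hx
  simpa using (((hx.const_mul (h x)).abs.sub ((hx.pow 2).const_mul δ)).max
    (tendsto_const_nhds (x := (0 : ℝ))))

lemma tendsto_integral_mul_zero_of_bounded {h : X → ℝ} {z : ℕ → X → ℝ} {C : ℝ}
    (hh : MemLp h 2 μ) (hz : ∀ n, MemLp (z n) 2 μ) (hC : ∀ n, ∫ x, z n x ^ 2 ∂μ ≤ C)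
    (hlim : ∀ᵐ x ∂μ, Tendsto (fun n => z n x) atTop (𝓝 0)) :
    Tendsto (fun n => ∫ x, h x * z n x ∂μ) atTop (𝓝 0) := by
  have hC0 : 0 ≤ C := (integral_nonneg fun _ => sq_nonneg _).trans (hC 0)
  refine Metric.tendsto_atTop.2 fun ε hε => ?_
  obtain ⟨δ, hδ, hδC⟩ : ∃ δ > 0, δ * C < ε / 2 :=
    ⟨ε / (2 * (C + 1)), by positivity, by rw [div_mul_eq_mul_div, div_lt_div_iff₀] <;> nlinarith⟩
  have hmax := tendsto_integral_max_sub_sq_zero hh (fun n => (hz n).aestronglyMeasurable) hlim hδ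
  obtain ⟨N, hN⟩ := eventually_atTop.1 (hmax.eventually (gt_mem_nhds (half_pos hε)))
  refine ⟨N, fun n hn => ?_⟩
  have hint : Integrable (fun x => |h x * z n x|) μ := (hh.integrable_mul (hz n)).abs
  have hsq : Integrable (fun x => δ * z n x ^ 2) μ := (hz n).integrable_sq.const_mul δ
  have hmaxint : Integrable (fun x => max (|h x * z n x| - δ * z n x ^ 2) 0) μ :=
    (hint.sub hsq).pos_part
  calc dist (∫ x, h x * z n x ∂μ) 0
      ≤ ∫ x, |h x * z n x| ∂μ := by
        rw [Real.dist_0_eq_abs]; exact abs_integral_le_integral_abs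
    _ ≤ ∫ x, (max (|h x * z n x| - δ * z n x ^ 2) 0 + δ * z n x ^ 2) ∂μ :=
        integral_mono hint (hmaxint.add hsq)
          fun x => sub_le_iff_le_add.1 (le_max_left _ _)
    _ = (∫ x, max (|h x * z n x| - δ * z n x ^ 2) 0 ∂μ) + δ * ∫ x, z n x ^ 2 ∂μ := by
        rw [integral_add hmaxint hsq, integral_const_mul]
    _ < ε := by linarith [hN n hn, mul_le_mul_of_nonneg_left (hC n) hδ.le]

lemma memLp_two_of_tendsto {z : ℕ → X → ℝ} {C : ℝ} (hz : ∀ n, MemLp (z n) 2 μ)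
    (hC : ∀ n, ∫ x, z n x ^ 2 ∂μ ≤ C)
    (hlim : ∀ᵐ x ∂μ, Tendsto (fun n => z n x) atTop (𝓝 (u x))) : MemLp u 2 μ := by
  have hlim_sq : ∀ᵐ x ∂μ, Tendsto (fun n => z n x ^ 2) atTop (𝓝 (u x ^ 2)) :=
    hlim.mono fun x hx => hx.pow 2
  have hbound n : eLpNorm (fun x => z n x ^ 2) 1 μ ≤ ENNReal.ofReal C := by
    rw [eLpNorm_one_eq_lintegral_enorm,
      ← ofReal_integral_norm_eq_lintegral_enorm (hz n).integrable_sq]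
    simpa only [norm_pow, Real.norm_eq_abs, sq_abs] using ENNReal.ofReal_le_ofReal (hC n)
  have hmeas := aestronglyMeasurable_of_tendsto_ae _ (fun n => (hz n).aestronglyMeasurable) hlim
  have hfin : eLpNorm (fun x => u x ^ 2) 1 μ < ⊤ := calc
    _ ≤ liminf (fun n => eLpNorm (fun x => z n x ^ 2) 1 μ) atTop :=
        Lp.eLpNorm_lim_le_liminf_eLpNorm (fun n => (hz n).integrable_sq.1) _ hlim_sq
    _ ≤ ENNReal.ofReal C := liminf_le_of_frequently_le' (Frequently.of_forall hbound)
    _ < ⊤ := ENNReal.ofReal_lt_top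
  exact (memLp_two_iff_integrable_sq hmeas).2 (memLp_one_iff_integrable.1 ⟨hmeas.pow 2, hfin⟩)

/-- The test function is `w - c` itself, with `c` the mean of `w`. -/
lemma exists_ae_eq_const_of_forall_integral_mul_eq_zero [IsFiniteMeasure μ] {w : X → ℝ}
    (hw : MemLp w 2 μ)
    (horth : ∀ ζ : X → ℝ, MemLp ζ 2 μ → ∫ x, ζ x ∂μ = 0 → ∫ x, w x * ζ x ∂μ = 0) :
    ∃ c, ∀ᵐ x ∂μ, w x = c := by
  set c := ⨍ x, w x ∂μ
  have hwc : MemLp (fun x => w x - c) 2 μ := hw.sub (memLp_const c)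
  have hmean : ∫ x, (w x - c) ∂μ = 0 := by
    rw [integral_sub (hw.integrable one_le_two) (integrable_const c)]
    exact sub_eq_zero.2 (integral_average μ w).symm
  have hint : Integrable (fun x => w x * (w x - c)) μ := hw.integrable_mul hwc
  have hsq : ∫ x, (w x - c) ^ 2 ∂μ = 0 := calc
    ∫ x, (w x - c) ^ 2 ∂μ = (∫ x, w x * (w x - c) ∂μ) - c * ∫ x, (w x - c) ∂μ := by
      rw [← integral_const_mul, ← integral_sub hint ((hwc.integrable one_le_two).const_mul c)]
      congr 1 with x
      ring
    _ = 0 := by rw [horth _ hwc hmean, hmean, mul_zero, sub_zero]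
  refine ⟨c, ?_⟩
  filter_upwards [(integral_eq_zero_iff_of_nonneg (fun _ => sq_nonneg _) hwc.integrable_sq).1 hsq]
    with x hx
  exact sub_eq_zero.1 (sq_eq_zero_iff.1 hx)

end SquareIntegrable

lemma intervalIntegrable_of_memLp_two {v : ℝ → ℝ} (hv : MemLp v 2) (a b : ℝ) :
    IntervalIntegrable v volume a b :=
  (hv.locallyIntegrable one_le_two).integrableOn_isCompact isCompact_uIcc |>.intervalIntegrable

lemma exists_subseq_tendsto_inner {E : Type*} [NormedAddCommGroup E] [InnerProductSpace ℝ E]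
    [CompleteSpace E] [TopologicalSpace.SeparableSpace E] {x : ℕ → E} {C : ℝ}
    (hC : ∀ n, ‖x n‖ ≤ C) :
    ∃ (y : E) (ns : ℕ → ℕ), StrictMono ns ∧
      ∀ e : E, Tendsto (fun k => inner ℝ (x (ns k)) e) atTop (𝓝 (inner ℝ y e)) := by
  have hball n : StrongDual.toWeakDual (innerSL ℝ (x n)) ∈
      WeakDual.toStrongDual ⁻¹' Metric.closedBall (0 : StrongDual ℝ E) C := by
    refine mem_preimage.2 (mem_closedBall_zero_iff.2 ?_)
    exact (innerSL_apply_norm ℝ (x n)).trans_le (hC n)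
  obtain ⟨a, -, ns, hns, hlim⟩ := WeakDual.isSeqCompact_closedBall ℝ E 0 C hball
  refine ⟨(InnerProductSpace.toDual ℝ E).symm (WeakDual.toStrongDual a), ns, hns, fun e => ?_⟩
  rw [InnerProductSpace.toDual_symm_apply]
  exact ((WeakDual.eval_continuous (𝕜 := ℝ) e).tendsto a).comp hlim

lemma inner_toLp_eq_integral {X : Type*} [MeasurableSpace X] {μ : Measure X} {u v : X → ℝ}
    (hu : MemLp u 2 μ) (hv : MemLp v 2 μ) :
    inner ℝ (hu.toLp u) (hv.toLp v) = ∫ x, u x * v x ∂μ := by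
  rw [L2.inner_def]
  refine integral_congr_ae ?_
  filter_upwards [hu.coeFn_toLp, hv.coeFn_toLp] with x hx hy
  rw [hx, hy, RCLike.inner_apply, conj_trivial, mul_comm]

lemma exists_subseq_tendsto_integral_mul {X : Type*} [MeasurableSpace X] {μ : Measure X}
    [IsSeparable μ] {u : ℕ → X → ℝ} {C : ℝ} (hu : ∀ n, MemLp (u n) 2 μ)
    (hC : ∀ n, ∫ x, u n x ^ 2 ∂μ ≤ C) :
    ∃ (v : X → ℝ) (ns : ℕ → ℕ), MemLp v 2 μ ∧ StrictMono ns ∧ ∀ h : X → ℝ, MemLp h 2 μ →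
      Tendsto (fun k => ∫ x, u (ns k) x * h x ∂μ) atTop (𝓝 (∫ x, v x * h x ∂μ)) := by
  have : Fact ((2 : ENNReal) ≠ ⊤) := ⟨by norm_num⟩
  have hnorm n : ‖(hu n).toLp (u n)‖ ≤ √C := by
    refine Real.le_sqrt_of_sq_le ?_
    rw [← real_inner_self_eq_norm_sq, inner_toLp_eq_integral]
    simpa only [pow_two] using hC n
  obtain ⟨y, ns, hns, hlim⟩ := exists_subseq_tendsto_inner hnorm
  refine ⟨y, ns, Lp.memLp y, hns, fun h hh => ?_⟩
  have hy := hlim (hh.toLp h)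
  simp only [inner_toLp_eq_integral] at hy
  rwa [← Lp.toLp_coeFn y (Lp.memLp y), inner_toLp_eq_integral] at hy

lemma tendsto_setIntegral_of_tendsto_integral_mul {X : Type*} [MeasurableSpace X] {μ : Measure X}
    {u : ℕ → X → ℝ} {v : X → ℝ} (hweak : ∀ h : X → ℝ, MemLp h 2 μ →
      Tendsto (fun n => ∫ x, u n x * h x ∂μ) atTop (𝓝 (∫ x, v x * h x ∂μ)))
    {s : Set X} (hs : MeasurableSet s) (hμs : μ s ≠ ⊤) :
    Tendsto (fun n => ∫ x in s, u n x ∂μ) atTop (𝓝 (∫ x in s, v x ∂μ)) := by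
  have hind (f : X → ℝ) : ∫ x, f x * s.indicator 1 x ∂μ = ∫ x in s, f x ∂μ := by
    simp only [← indicator_mul_right, Pi.one_apply, mul_one, integral_indicator hs]
  simpa only [hind] using hweak (s.indicator 1) (memLp_indicator_const 2 hs 1 (Or.inr hμs))

/-! ### The space of primitives of square-integrable functions -/

/-- Pairs `(u, u')` of square-integrable functions with `u` a primitive of `u'`. This is `H¹(ℝ)`
with the weak derivative carried as data, each function being its continuous representative;
unlike `InH1`, which asks for differentiability at every point, it is closed under weak limits. -/
def weakH1 : Submodule ℝ ((ℝ → ℝ) × (ℝ → ℝ)) where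
  carrier := {p | MemLp p.1 2 ∧ MemLp p.2 2 ∧ ∀ a b, ∫ x in a..b, p.2 x = p.1 b - p.1 a}
  zero_mem' := ⟨MemLp.zero, MemLp.zero, fun a b => by simp⟩
  add_mem' := by
    rintro p q ⟨hp, hp', hp_ftc⟩ ⟨hq, hq', hq_ftc⟩
    refine ⟨hp.add hq, hp'.add hq', fun a b => ?_⟩
    have hint {v : ℝ → ℝ} (hv : MemLp v 2) : IntervalIntegrable v volume a b :=
      intervalIntegrable_of_memLp_two hv a b
    simp only [Prod.snd_add, Prod.fst_add, Pi.add_apply]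
    rw [intervalIntegral.integral_add (hint hp') (hint hq'), hp_ftc, hq_ftc]
    ring
  smul_mem' := by
    rintro t p ⟨hp, hp', hp_ftc⟩
    refine ⟨hp.const_mul t, hp'.const_mul t, fun a b => ?_⟩
    simp only [Prod.smul_snd, Prod.smul_fst, Pi.smul_apply, smul_eq_mul,
      intervalIntegral.integral_const_mul, hp_ftc, mul_sub]

/-- The elements of `weakH1`, coerced to functions through their first component. -/
abbrev WeakH1 : Type := weakH1

instance : CoeFun WeakH1 fun _ => ℝ → ℝ := ⟨fun u => u.1.1⟩

namespace WeakH1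

/-- The square-integrable function of which `u` is a primitive. -/
def weakDeriv (u : WeakH1) : ℝ → ℝ := u.1.2

variable (u v : WeakH1) (t γ x y : ℝ)

lemma zero_apply : (0 : WeakH1) x = 0 := rfl
lemma add_apply : (u + v) x = u x + v x := rfl
lemma sub_apply : (u - v) x = u x - v x := rfl
lemma smul_apply : (t • u) x = t * u x := rfl
lemma weakDeriv_zero_apply : (0 : WeakH1).weakDeriv x = 0 := rfl
lemma weakDeriv_add_apply : (u + v).weakDeriv x = u.weakDeriv x + v.weakDeriv x := rfl
lemma weakDeriv_sub_apply : (u - v).weakDeriv x = u.weakDeriv x - v.weakDeriv x := rfl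
lemma weakDeriv_smul_apply : (t • u).weakDeriv x = t * u.weakDeriv x := rfl

lemma memLp : MemLp u 2 := u.2.1

lemma memLp_weakDeriv : MemLp u.weakDeriv 2 := u.2.2.1

lemma integral_weakDeriv (a b : ℝ) : ∫ x in a..b, u.weakDeriv x = u b - u a := u.2.2.2 a b

lemma locallyIntegrable_weakDeriv : LocallyIntegrable u.weakDeriv :=
  u.memLp_weakDeriv.locallyIntegrable one_le_two

lemma eq_add_integral_weakDeriv (a : ℝ) : u = fun x => u a + ∫ s in a..x, u.weakDeriv s := by
  ext x
  rw [integral_weakDeriv]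
  ring

lemma ae_hasDerivAt : ∀ᵐ x, HasDerivAt u (u.weakDeriv x) x := by
  filter_upwards [LocallyIntegrable.ae_hasDerivAt_integral u.locallyIntegrable_weakDeriv] with x hx
  rw [u.eq_add_integral_weakDeriv 0]
  exact (hx 0).const_add _

lemma continuous : Continuous u := by
  rw [u.eq_add_integral_weakDeriv 0]
  exact continuous_const.add
    (intervalIntegral.continuous_primitive (intervalIntegrable_of_memLp_two u.memLp_weakDeriv) 0)

/-- The energy `∫ u'² + γ ∫ u²`; the functional `I(f, g)` is `energy α₀ f + energy β₀ g`. -/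
def energy (γ : ℝ) (u : WeakH1) : ℝ := (∫ x, u.weakDeriv x ^ 2) + γ * ∫ x, u x ^ 2

/-- The symmetric bilinear form whose quadratic form is `energy γ`. -/
def energyForm (γ : ℝ) (u v : WeakH1) : ℝ :=
  (∫ x, u.weakDeriv x * v.weakDeriv x) + γ * ∫ x, u x * v x

/-- The cubic functional `∫ u² v` of the constraint. -/
def cubic (u v : WeakH1) : ℝ := ∫ x, u x ^ 2 * v x

lemma energy_add_smul :
    energy γ (u + t • v) = energy γ u + 2 * t * energyForm γ u v + t ^ 2 * energy γ v := by
  simp only [energy, energyForm, add_apply, smul_apply, weakDeriv_add_apply, weakDeriv_smul_apply]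
  rw [integral_add_const_mul_sq u.memLp v.memLp,
    integral_add_const_mul_sq u.memLp_weakDeriv v.memLp_weakDeriv]
  ring

lemma energy_sub : energy γ (u - v) = energy γ u - 2 * energyForm γ u v + energy γ v := by
  rw [sub_eq_add_neg, ← neg_one_smul ℝ v, energy_add_smul]
  ring

lemma energy_zero : energy γ 0 = 0 := by
  simp [energy, weakDeriv_zero_apply]

variable {u γ}

lemma energy_nonneg (hγ : 0 ≤ γ) : 0 ≤ energy γ u :=
  add_nonneg (integral_nonneg fun _ => sq_nonneg _)
    (mul_nonneg hγ (integral_nonneg fun _ => sq_nonneg _))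

lemma integral_weakDeriv_sq_le_energy (hγ : 0 ≤ γ) : ∫ x, u.weakDeriv x ^ 2 ≤ energy γ u :=
  le_add_of_nonneg_right (mul_nonneg hγ (integral_nonneg fun _ => sq_nonneg _))

lemma integral_sq_le_energy_div (hγ : 0 < γ) : ∫ x, u x ^ 2 ≤ energy γ u / γ := by
  rw [le_div_iff₀ hγ, mul_comm]
  exact le_add_of_nonneg_left (integral_nonneg fun _ => sq_nonneg _)

lemma integral_sq_le_energy_one : ∫ x, u x ^ 2 ≤ energy 1 u := by
  simpa only [div_one] using integral_sq_le_energy_div one_pos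

lemma energy_one_le (hγ : 0 < γ) : energy 1 u ≤ (1 + γ⁻¹) * energy γ u := by
  have hsq := integral_sq_le_energy_div (u := u) hγ
  have hderiv := integral_weakDeriv_sq_le_energy (u := u) hγ.le
  rw [div_eq_inv_mul] at hsq
  unfold energy at hsq hderiv ⊢
  linarith

lemma sq_sub_le (hxy : x ≤ y) : (u y - u x) ^ 2 ≤ (y - x) * ∫ s, u.weakDeriv s ^ 2 := by
  rw [← integral_weakDeriv]
  refine (sq_intervalIntegral_le u.memLp_weakDeriv hxy).trans
    (mul_le_mul_of_nonneg_left ?_ (sub_nonneg.2 hxy))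
  rw [intervalIntegral.integral_of_le hxy]
  exact setIntegral_le_integral u.memLp_weakDeriv.integrable_sq (ae_of_all _ fun _ => sq_nonneg _)

/-- Averages `u x² ≤ 2 u(y)² + 2 (u x - u y)²` over `y ∈ [x, x + 1]`. -/
lemma sq_apply_le_energy : u x ^ 2 ≤ 2 * energy 1 u := by
  have hbound : ∀ y ∈ Icc x (x + 1), u x ^ 2 ≤ 2 * u y ^ 2 + 2 * ∫ s, u.weakDeriv s ^ 2 := by
    rintro y ⟨hxy, hyx⟩
    have hsub := sq_sub_le (u := u) x y hxy
    have hle : (y - x) * ∫ s, u.weakDeriv s ^ 2 ≤ ∫ s, u.weakDeriv s ^ 2 :=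
      mul_le_of_le_one_left (integral_nonneg fun _ => sq_nonneg _) (by linarith)
    linarith [sq_nonneg (2 * u y - u x)]
  have hint : IntervalIntegrable (fun y => 2 * u y ^ 2) volume x (x + 1) :=
    ((u.continuous.pow 2).const_mul 2).intervalIntegrable _ _
  have havg := intervalIntegral.integral_mono_on (by linarith) intervalIntegrable_const
    (hint.add intervalIntegrable_const) hbound
  rw [intervalIntegral.integral_add hint intervalIntegrable_const,
    intervalIntegral.integral_const_mul] at havg
  have hle : ∫ y in x..(x + 1), u y ^ 2 ≤ ∫ y, u y ^ 2 := by
    rw [intervalIntegral.integral_of_le (by linarith)]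
    exact setIntegral_le_integral u.memLp.integrable_sq (ae_of_all _ fun _ => sq_nonneg _)
  simp only [intervalIntegral.integral_const, add_sub_cancel_left, one_smul] at havg
  unfold energy
  linarith

lemma abs_apply_le : |u x| ≤ √(2 * energy 1 u) := Real.abs_le_sqrt (sq_apply_le_energy x)

lemma memLp_mul (u v : WeakH1) : MemLp (fun x => u x * v x) 2 := by
  refine u.memLp.of_le_mul (u.continuous.mul v.continuous).aestronglyMeasurable
    (ae_of_all _ fun x => ?_) (c := √(2 * energy 1 v))
  rw [norm_mul, mul_comm]
  exact mul_le_mul_of_nonneg_right (v.abs_apply_le x) (norm_nonneg _)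

lemma integrable_mul_mul (u v w : WeakH1) : Integrable fun x => u x * v x * w x :=
  (memLp_mul u v).integrable_mul w.memLp

lemma integrable_cubic (u v : WeakH1) : Integrable fun x => u x ^ 2 * v x := by
  simpa only [pow_two] using integrable_mul_mul u u v

variable {v : WeakH1}

lemma abs_cubic_le_of_abs_le {c : ℝ} (hc : ∀ x, |v x| ≤ c) : |cubic u v| ≤ c * ∫ x, u x ^ 2 := by
  rw [cubic, ← integral_const_mul]
  refine abs_integral_le_integral_abs.trans (integral_mono (integrable_cubic u v).abs
    (u.memLp.integrable_sq.const_mul c) fun x => ?_)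
  simp only [abs_mul, abs_pow, sq_abs]
  rw [mul_comm]
  exact mul_le_mul_of_nonneg_right (hc x) (sq_nonneg _)

lemma abs_cubic_le : |cubic u v| ≤ √(2 * energy 1 v) * energy 1 u :=
  (abs_cubic_le_of_abs_le v.abs_apply_le).trans
    (mul_le_mul_of_nonneg_left integral_sq_le_energy_one (Real.sqrt_nonneg _))

lemma cubic_add_smul_left (u η v : WeakH1) (t : ℝ) :
    cubic (u + t • η) v = cubic u v + 2 * t * (∫ x, u x * η x * v x) + t ^ 2 * cubic η v := by
  have hmid : Integrable fun x => 2 * t * (u x * η x * v x) :=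
    (integrable_mul_mul u η v).const_mul _
  have hsq : Integrable fun x => t ^ 2 * (η x ^ 2 * v x) := (integrable_cubic η v).const_mul _
  calc cubic (u + t • η) v
      = ∫ x, (u x ^ 2 * v x + 2 * t * (u x * η x * v x) + t ^ 2 * (η x ^ 2 * v x)) := by
        unfold cubic
        congr 1 with x
        rw [add_apply, smul_apply]
        ring
    _ = _ := by
        rw [integral_add ((integrable_cubic u v).fun_add hmid) hsq,
          integral_add (integrable_cubic u v) hmid, integral_const_mul, integral_const_mul, cubic,
          cubic]

lemma cubic_add_smul_right (u v η : WeakH1) (t : ℝ) :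
    cubic u (v + t • η) = cubic u v + t * cubic u η := by
  simp only [cubic, add_apply, smul_apply, mul_add, mul_left_comm _ t]
  rw [integral_add (integrable_cubic u v) ((integrable_cubic u η).const_mul t), integral_const_mul]

lemma cubic_add_add (u p v q : WeakH1) :
    cubic (u + p) (v + q) = cubic u v + (∫ x, u x * u x * q x) + 2 * (∫ x, u x * v x * p x)
      + 2 * (∫ x, u x * (p x * q x)) + (∫ x, v x * (p x * p x)) + cubic p q := by
  have hcross : ∫ x, u x * p x * (v x + q x)
      = (∫ x, u x * v x * p x) + ∫ x, u x * (p x * q x) := by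
    have hupq : Integrable fun x => u x * (p x * q x) := u.memLp.integrable_mul (memLp_mul p q)
    rw [← integral_add (integrable_mul_mul u v p) hupq]
    congr 1 with x
    ring
  have hu : cubic u q = ∫ x, u x * u x * q x := by simp only [cubic, pow_two]
  have hp : cubic p v = ∫ x, v x * (p x * p x) := by simp only [cubic, pow_two, mul_comm]
  have hleft := cubic_add_smul_left u p (v + q) 1
  have hright w := cubic_add_smul_right w v q 1
  simp only [one_smul, one_mul, one_pow, mul_one] at hleft hright
  simp only [hleft, hright, add_apply, hcross, ← hu, ← hp]
  ring

lemma cubic_zero_left : cubic 0 v = 0 := by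
  simp [cubic]

lemma energy_sub_le (hγ : 0 ≤ γ) : energy γ (u - v) ≤ 2 * energy γ u + 2 * energy γ v := by
  have hadd : 0 ≤ energy γ (u + (1 : ℝ) • v) := energy_nonneg hγ
  rw [energy_add_smul] at hadd
  rw [energy_sub]
  linarith

/-- The function `u (· + y)`. -/
def translate (u : WeakH1) (y : ℝ) : WeakH1 where
  val := (fun x => u (x + y), fun x => u.weakDeriv (x + y))
  property := by
    have hmp := measurePreserving_add_right (volume : Measure ℝ) y
    refine ⟨u.memLp.comp_measurePreserving hmp, u.memLp_weakDeriv.comp_measurePreserving hmp,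
      fun a b => ?_⟩
    rw [intervalIntegral.integral_comp_add_right, integral_weakDeriv]

lemma translate_apply (u : WeakH1) (y x : ℝ) : u.translate y x = u (x + y) := rfl

lemma weakDeriv_translate_apply (u : WeakH1) (y x : ℝ) :
    (u.translate y).weakDeriv x = u.weakDeriv (x + y) := rfl

lemma energy_translate (u : WeakH1) (γ y : ℝ) : energy γ (u.translate y) = energy γ u := by
  simp only [energy, translate_apply, weakDeriv_translate_apply]
  rw [integral_add_right_eq_self (fun x => u.weakDeriv x ^ 2),
    integral_add_right_eq_self (fun x => u x ^ 2)]

lemma cubic_translate (u v : WeakH1) (y : ℝ) :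
    cubic (u.translate y) (v.translate y) = cubic u v :=
  integral_add_right_eq_self (fun x => u x ^ 2 * v x) y

lemma deriv_ae_eq (u : WeakH1) : deriv u =ᵐ[volume] u.weakDeriv :=
  u.ae_hasDerivAt.mono fun _ hx => hx.deriv

lemma inH1_of_differentiable (hu : Differentiable ℝ u) : InH1 u :=
  ⟨hu, u.memLp.integrable_sq, (u.memLp_weakDeriv.ae_eq u.deriv_ae_eq.symm).integrable_sq⟩

lemma Ifun_eq_energy (u v : WeakH1) (α β : ℝ) : Ifun α β u v = energy α u + energy β v := by
  have hae : (fun x => deriv u x ^ 2 + deriv v x ^ 2 + α * u x ^ 2 + β * v x ^ 2) =ᵐ[volume]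
      fun x => (u.weakDeriv x ^ 2 + v.weakDeriv x ^ 2 + α * u x ^ 2) + β * v x ^ 2 := by
    filter_upwards [u.deriv_ae_eq, v.deriv_ae_eq] with x hx hy
    rw [hx, hy]
  have hu := u.memLp_weakDeriv.integrable_sq
  have hv := v.memLp_weakDeriv.integrable_sq
  have hαu := u.memLp.integrable_sq.const_mul α
  rw [Ifun, integral_congr_ae hae,
    integral_add ((hu.fun_add hv).fun_add hαu) (v.memLp.integrable_sq.const_mul β),
    integral_add (hu.fun_add hv) hαu, integral_add hu hv, integral_const_mul, integral_const_mul,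
    energy, energy]
  ring

end WeakH1

namespace InH1

variable {f : ℝ → ℝ}

lemma memLp (hf : InH1 f) : MemLp f 2 :=
  (memLp_two_iff_integrable_sq hf.1.continuous.aestronglyMeasurable).2 hf.2.1

lemma memLp_deriv (hf : InH1 f) : MemLp (deriv f) 2 :=
  (memLp_two_iff_integrable_sq (measurable_deriv f).aestronglyMeasurable).2 hf.2.2

/-- A function of class `InH1` with its derivative, as an element of `WeakH1`. -/
def toWeakH1 (hf : InH1 f) : WeakH1 where
  val := (f, deriv f)
  property := ⟨hf.memLp, hf.memLp_deriv, fun a b =>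
    intervalIntegral.integral_deriv_eq_sub (fun x _ => hf.1 x)
      (intervalIntegrable_of_memLp_two hf.memLp_deriv a b)⟩

end InH1

/-! ### Weak convergence -/

/-- Weak convergence in `H¹(ℝ)`. In place of the weak convergence of the functions themselves it
records their pointwise convergence, which together with the energy bound implies it. -/
structure WeakTendsto (u : ℕ → WeakH1) (φ : WeakH1) : Prop where
  bounded : ∃ C, ∀ n, WeakH1.energy 1 (u n) ≤ C
  tendsto_apply : ∀ x, Tendsto (fun n => u n x) atTop (𝓝 (φ x))
  tendsto_integral_weakDeriv : ∀ h : ℝ → ℝ, MemLp h 2 →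
    Tendsto (fun n => ∫ x, (u n).weakDeriv x * h x) atTop (𝓝 (∫ x, φ.weakDeriv x * h x))

namespace WeakTendsto

open WeakH1

variable {u v : ℕ → WeakH1} {φ ψ : WeakH1}

lemma comp_strictMono (hu : WeakTendsto u φ) {ns : ℕ → ℕ} (hns : StrictMono ns) :
    WeakTendsto (u ∘ ns) φ where
  bounded := hu.bounded.imp fun _ hC n => hC (ns n)
  tendsto_apply x := (hu.tendsto_apply x).comp hns.tendsto_atTop
  tendsto_integral_weakDeriv h hh := (hu.tendsto_integral_weakDeriv h hh).comp hns.tendsto_atTop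

lemma sub_limit (hu : WeakTendsto u φ) : WeakTendsto (fun n => u n - φ) 0 where
  bounded := hu.bounded.imp' (fun C => 2 * C + 2 * energy 1 φ) fun C hC n =>
    (energy_sub_le zero_le_one).trans (by linarith [hC n])
  tendsto_apply x := tendsto_sub_nhds_zero_iff.2 (hu.tendsto_apply x)
  tendsto_integral_weakDeriv h hh := by
    have hsub n : ∫ x, (u n - φ).weakDeriv x * h x
        = (∫ x, (u n).weakDeriv x * h x) - ∫ x, φ.weakDeriv x * h x := by
      simp only [weakDeriv_sub_apply, sub_mul]
      exact integral_sub ((u n).memLp_weakDeriv.integrable_mul hh)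
        (φ.memLp_weakDeriv.integrable_mul hh)
    simpa only [hsub, weakDeriv_zero_apply, zero_mul, integral_zero] using
      tendsto_sub_nhds_zero_iff.2 (hu.tendsto_integral_weakDeriv h hh)

lemma tendsto_integral_mul (hu : WeakTendsto u 0) {h : ℝ → ℝ} (hh : MemLp h 2) :
    Tendsto (fun n => ∫ x, h x * u n x) atTop (𝓝 0) := by
  obtain ⟨C, hC⟩ := hu.bounded
  exact tendsto_integral_mul_zero_of_bounded hh (fun n => (u n).memLp)
    (fun n => integral_sq_le_energy_one.trans (hC n)) (ae_of_all _ hu.tendsto_apply)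

lemma tendsto_integral_mul_mul (hu : WeakTendsto u 0) (hv : WeakTendsto v 0) {h : ℝ → ℝ}
    (hh : MemLp h 2) : Tendsto (fun n => ∫ x, h x * (u n x * v n x)) atTop (𝓝 0) := by
  obtain ⟨B, hB⟩ := hu.bounded
  obtain ⟨C, hC⟩ := hv.bounded
  have hB0 : 0 ≤ B := (energy_nonneg zero_le_one).trans (hB 0)
  refine tendsto_integral_mul_zero_of_bounded hh (fun n => memLp_mul (u n) (v n))
    (C := 2 * B * C) (fun n => ?_) (ae_of_all _ fun x => ?_)
  · calc ∫ x, (u n x * v n x) ^ 2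
        ≤ ∫ x, 2 * B * v n x ^ 2 := by
          refine integral_mono (memLp_mul (u n) (v n)).integrable_sq
            ((v n).memLp.integrable_sq.const_mul _) fun x => ?_
          simp only [mul_pow]
          refine mul_le_mul_of_nonneg_right ?_ (sq_nonneg _)
          exact (sq_apply_le_energy x).trans (by linarith [hB n])
      _ = 2 * B * ∫ x, v n x ^ 2 := integral_const_mul _ _
      _ ≤ 2 * B * C := by
          gcongr
          exact integral_sq_le_energy_one.trans (hC n)
  · simpa only [zero_apply, mul_zero] using (hu.tendsto_apply x).mul (hv.tendsto_apply x)

lemma tendsto_energyForm_zero (hu : WeakTendsto u 0) (γ : ℝ) (η : WeakH1) :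
    Tendsto (fun n => energyForm γ (u n) η) atTop (𝓝 0) := by
  have hderiv := hu.tendsto_integral_weakDeriv η.weakDeriv η.memLp_weakDeriv
  have hfun := (hu.tendsto_integral_mul η.memLp).const_mul γ
  simpa only [energyForm, weakDeriv_zero_apply, zero_mul, integral_zero, mul_zero, add_zero,
    mul_comm (η _)] using hderiv.add hfun

lemma tendsto_energy_sub_energy (hu : WeakTendsto u φ) (γ : ℝ) :
    Tendsto (fun n => energy γ (u n) - energy γ (u n - φ)) atTop (𝓝 (energy γ φ)) := by
  have hsplit n : energy γ (u n) - energy γ (u n - φ)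
      = 2 * energyForm γ (u n - φ) φ + energy γ φ := by
    have hadd := energy_add_smul (u n - φ) φ 1 γ
    rw [one_smul, sub_add_cancel] at hadd
    rw [hadd]
    ring
  simpa only [hsplit, mul_zero, zero_add] using
    ((hu.sub_limit.tendsto_energyForm_zero γ φ).const_mul 2).add_const (energy γ φ)

lemma tendsto_cubic_sub_cubic (hu : WeakTendsto u φ) (hv : WeakTendsto v ψ) :
    Tendsto (fun n => cubic (u n) (v n) - cubic (u n - φ) (v n - ψ)) atTop (𝓝 (cubic φ ψ)) := by
  have hp := hu.sub_limit
  have hq := hv.sub_limit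
  have hsplit n : cubic (u n) (v n) - cubic (u n - φ) (v n - ψ)
      = cubic φ ψ + (∫ x, φ x * φ x * (v n - ψ) x) + 2 * (∫ x, φ x * ψ x * (u n - φ) x)
        + 2 * (∫ x, φ x * ((u n - φ) x * (v n - ψ) x))
        + ∫ x, ψ x * ((u n - φ) x * (u n - φ) x) := by
    have hadd := cubic_add_add φ (u n - φ) ψ (v n - ψ)
    rw [add_sub_cancel, add_sub_cancel] at hadd
    rw [hadd, add_sub_cancel_right]
  have hlim := ((((tendsto_const_nhds (x := cubic φ ψ)).add
    (hq.tendsto_integral_mul (memLp_mul φ φ))).add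
    ((hp.tendsto_integral_mul (memLp_mul φ ψ)).const_mul 2)).add
    ((hp.tendsto_integral_mul_mul hq φ.memLp).const_mul 2)).add
    (hp.tendsto_integral_mul_mul hp ψ.memLp)
  simpa only [hsplit, mul_zero, add_zero] using hlim

lemma of_ae_tendsto {u : ℕ → WeakH1} {φ : WeakH1} {C : ℝ} (hC : ∀ n, energy 1 (u n) ≤ C)
    (hfun : ∀ x, Tendsto (fun n => u n x) atTop (𝓝 (φ x)))
    (hderiv : ∀ᵐ x, Tendsto (fun n => (u n).weakDeriv x) atTop (𝓝 (φ.weakDeriv x))) :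
    WeakTendsto u φ where
  bounded := ⟨C, hC⟩
  tendsto_apply := hfun
  tendsto_integral_weakDeriv h hh := by
    have hbound n : ∫ x, (u n - φ).weakDeriv x ^ 2 ≤ 2 * C + 2 * energy 1 φ :=
      (integral_weakDeriv_sq_le_energy zero_le_one).trans
        ((energy_sub_le zero_le_one).trans (by linarith [hC n]))
    have hzero := tendsto_integral_mul_zero_of_bounded hh
      (fun n => (u n - φ).memLp_weakDeriv) hbound
      (hderiv.mono fun x hx => tendsto_sub_nhds_zero_iff.2 hx)
    have hsub n : ∫ x, h x * (u n - φ).weakDeriv x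
        = (∫ x, (u n).weakDeriv x * h x) - ∫ x, φ.weakDeriv x * h x := by
      simp only [weakDeriv_sub_apply, mul_comm (h _), sub_mul]
      exact integral_sub ((u n).memLp_weakDeriv.integrable_mul hh)
        (φ.memLp_weakDeriv.integrable_mul hh)
    simpa only [hsub, tendsto_sub_nhds_zero_iff] using hzero

lemma exists_subseq {u : ℕ → WeakH1} {C : ℝ} (hC : ∀ n, energy 1 (u n) ≤ C) :
    ∃ (φ : WeakH1) (ns : ℕ → ℕ), StrictMono ns ∧ WeakTendsto (u ∘ ns) φ := by
  have hderiv n : ∫ x, (u n).weakDeriv x ^ 2 ≤ C :=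
    (integral_weakDeriv_sq_le_energy zero_le_one).trans (hC n)
  have hfun n : ∫ x, u n x ^ 2 ≤ C := integral_sq_le_energy_one.trans (hC n)
  obtain ⟨φ', ns, hφ', hns, hweak⟩ :=
    exists_subseq_tendsto_integral_mul (fun n => (u n).memLp_weakDeriv) hderiv
  have hzero n : u (ns n) 0 ∈ Metric.closedBall (0 : ℝ) (√(2 * C)) := by
    rw [mem_closedBall_zero_iff]
    exact ((u (ns n)).abs_apply_le 0).trans (Real.sqrt_le_sqrt (by linarith [hC (ns n)]))
  obtain ⟨c, -, ms, hms, hc⟩ := tendsto_subseq_of_bounded Metric.isBounded_closedBall hzero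
  have hprim x : Tendsto (fun n => ∫ s in (0 : ℝ)..x, (u (ns (ms n))).weakDeriv s) atTop
      (𝓝 (∫ s in (0 : ℝ)..x, φ' s)) :=
    ((tendsto_setIntegral_of_tendsto_integral_mul hweak measurableSet_Ioc measure_Ioc_lt_top.ne).sub
      (tendsto_setIntegral_of_tendsto_integral_mul hweak measurableSet_Ioc
        measure_Ioc_lt_top.ne)).comp hms.tendsto_atTop
  have happly x : Tendsto (fun n => u (ns (ms n)) x) atTop (𝓝 (c + ∫ s in (0 : ℝ)..x, φ' s)) :=
    (hc.add (hprim x)).congr fun n => by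
      rw [integral_weakDeriv, Function.comp_apply, add_sub_cancel]
  refine ⟨⟨(fun x => c + ∫ s in (0 : ℝ)..x, φ' s, φ'), ?_, hφ', fun a b => ?_⟩, ns ∘ ms,
    hns.comp hms, ⟨C, fun n => hC _⟩, happly, fun h hh => (hweak h hh).comp hms.tendsto_atTop⟩
  · exact memLp_two_of_tendsto (fun n => (u (ns (ms n))).memLp) (fun n => hfun _)
      (ae_of_all _ happly)
  · rw [add_sub_add_left_eq_sub, intervalIntegral.integral_interval_sub_left] <;>
      exact intervalIntegrable_of_memLp_two hφ' _ _

end WeakTendsto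

/-! ### Steklov averages -/

/-- The average of `f` over `[x, x + ε]`. -/
def steklov (ε : ℝ) (f : ℝ → ℝ) (x : ℝ) : ℝ := ε⁻¹ * ∫ t in x..x + ε, f t

lemma steklov_eq_convolution {ε : ℝ} (hε : 0 ≤ ε) (f : ℝ → ℝ) :
    steklov ε f = (indicator (Ico (-ε) 0) fun _ => ε⁻¹) ⋆[ContinuousLinearMap.mul ℝ ℝ] f := by
  ext x
  have hind t : (indicator (Ico (-ε) 0) fun _ => ε⁻¹) t * f (x - t)
      = indicator (Ico (-ε) 0) (fun t => ε⁻¹ * f (x - t)) t := by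
    by_cases ht : t ∈ Ico (-ε) 0 <;> simp [ht]
  simp only [convolution, ContinuousLinearMap.mul_apply', hind]
  rw [integral_indicator measurableSet_Ico, integral_Ico_eq_integral_Ioc,
    ← intervalIntegral.integral_of_le (neg_nonpos.2 hε), intervalIntegral.integral_const_mul,
    intervalIntegral.integral_comp_sub_left, sub_zero, sub_neg_eq_add, steklov]

lemma integrable_steklov {f : ℝ → ℝ} (hf : Integrable f) {ε : ℝ} (hε : 0 ≤ ε) :
    Integrable (steklov ε f) := by
  rw [steklov_eq_convolution hε]
  exact ((integrable_indicator_iff measurableSet_Ico).2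
    (integrableOn_const measure_Ico_lt_top.ne)).integrable_convolution _ hf

lemma integral_steklov {f : ℝ → ℝ} (hf : Integrable f) {ε : ℝ} (hε : 0 < ε) :
    ∫ x, steklov ε f x = ∫ x, f x := by
  rw [steklov_eq_convolution hε.le, integral_convolution _ ((integrable_indicator_iff
    measurableSet_Ico).2 (integrableOn_const measure_Ico_lt_top.ne)) hf,
    integral_indicator_const _ measurableSet_Ico]
  simp [hε.le, hε.ne']

lemma steklov_sq_le {f : ℝ → ℝ} (hf : MemLp f 2) {ε : ℝ} (hε : 0 < ε) (x : ℝ) :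
    steklov ε f x ^ 2 ≤ steklov ε (fun t => f t ^ 2) x := by
  have hjensen := sq_intervalIntegral_le hf (le_add_of_nonneg_right hε.le : x ≤ x + ε)
  rw [add_sub_cancel_left] at hjensen
  calc steklov ε f x ^ 2 = ε⁻¹ ^ 2 * (∫ t in x..x + ε, f t) ^ 2 := mul_pow _ _ _
    _ ≤ ε⁻¹ ^ 2 * (ε * ∫ t in x..x + ε, f t ^ 2) := by gcongr
    _ = steklov ε (fun t => f t ^ 2) x := by rw [steklov]; field_simp

lemma steklov_eq_sub {f : ℝ → ℝ} (hf : MemLp f 2) (ε : ℝ) : steklov ε f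
    = fun x => ε⁻¹ * ((∫ t in (0 : ℝ)..x + ε, f t) - ∫ t in (0 : ℝ)..x, f t) := by
  ext x
  rw [steklov, intervalIntegral.integral_interval_sub_left] <;>
    exact intervalIntegrable_of_memLp_two hf _ _

lemma continuous_steklov {f : ℝ → ℝ} (hf : MemLp f 2) (ε : ℝ) : Continuous (steklov ε f) := by
  have hprim := intervalIntegral.continuous_primitive (intervalIntegrable_of_memLp_two hf) 0
  rw [steklov_eq_sub hf]
  fun_prop

lemma memLp_steklov {f : ℝ → ℝ} (hf : MemLp f 2) {ε : ℝ} (hε : 0 < ε) :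
    MemLp (steklov ε f) 2 := by
  have hmeas : AEStronglyMeasurable (steklov ε f) :=
    (continuous_steklov hf ε).aestronglyMeasurable
  refine (memLp_two_iff_integrable_sq hmeas).2
    ((integrable_steklov hf.integrable_sq hε.le).mono' (hmeas.pow 2) (ae_of_all _ fun x => ?_))
  rw [Real.norm_of_nonneg (sq_nonneg _)]
  exact steklov_sq_le hf hε x

lemma integral_steklov_sq_le {f : ℝ → ℝ} (hf : MemLp f 2) {ε : ℝ} (hε : 0 < ε) :
    ∫ x, steklov ε f x ^ 2 ≤ ∫ x, f x ^ 2 :=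
  (integral_mono (memLp_steklov hf hε).integrable_sq (integrable_steklov hf.integrable_sq hε.le)
    (steklov_sq_le hf hε)).trans_eq (integral_steklov hf.integrable_sq hε)

namespace WeakH1

lemma hasDerivAt_steklov (u : WeakH1) (ε x : ℝ) :
    HasDerivAt (steklov ε u) (steklov ε u.weakDeriv x) x := by
  rw [steklov, integral_weakDeriv]
  have hprim y : HasDerivAt (fun y => ∫ t in (0 : ℝ)..y, u t) (u y) y :=
    u.continuous.integral_hasStrictDerivAt 0 y |>.hasDerivAt
  rw [steklov_eq_sub u.memLp]
  exact (((hprim (x + ε)).comp_add_const x ε).sub (hprim x)).const_mul _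

lemma inH1_steklov (u : WeakH1) {ε : ℝ} (hε : 0 < ε) : InH1 (steklov ε u) := by
  have hderiv : deriv (steklov ε u) = steklov ε u.weakDeriv :=
    funext fun x => (u.hasDerivAt_steklov ε x).deriv
  refine ⟨fun x => (u.hasDerivAt_steklov ε x).differentiableAt,
    (memLp_steklov u.memLp hε).integrable_sq, ?_⟩
  rw [hderiv]
  exact (memLp_steklov u.memLp_weakDeriv hε).integrable_sq

lemma weakDeriv_toWeakH1_steklov (u : WeakH1) {ε : ℝ} (hε : 0 < ε) :
    (u.inH1_steklov hε).toWeakH1.weakDeriv = steklov ε u.weakDeriv :=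
  funext fun x => (u.hasDerivAt_steklov ε x).deriv

lemma energy_steklov_le (u : WeakH1) {γ ε : ℝ} (hγ : 0 ≤ γ) (hε : 0 < ε) :
    energy γ (u.inH1_steklov hε).toWeakH1 ≤ energy γ u := by
  rw [energy, weakDeriv_toWeakH1_steklov u hε]
  exact add_le_add (integral_steklov_sq_le u.memLp_weakDeriv hε)
    (mul_le_mul_of_nonneg_left (integral_steklov_sq_le u.memLp hε) hγ)

end WeakH1

lemma tendsto_steklov_of_hasDerivAt {f : ℝ → ℝ} {x : ℝ} (hf : MemLp f 2)
    (hx : HasDerivAt (fun y => ∫ t in (0 : ℝ)..y, f t) (f x) x) :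
    Tendsto (fun ε => steklov ε f x) (𝓝[>] 0) (𝓝 (f x)) := by
  refine (hasDerivAt_iff_tendsto_slope_zero.1 hx |>.mono_left
    (nhdsWithin_mono 0 fun ε (hε : 0 < ε) => hε.ne')).congr fun ε => ?_
  rw [steklov_eq_sub hf, smul_eq_mul]

lemma ae_tendsto_steklov {f : ℝ → ℝ} (hf : MemLp f 2) :
    ∀ᵐ x, Tendsto (fun ε => steklov ε f x) (𝓝[>] 0) (𝓝 (f x)) := by
  filter_upwards [LocallyIntegrable.ae_hasDerivAt_integral (hf.locallyIntegrable one_le_two)]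
    with x hx using tendsto_steklov_of_hasDerivAt hf (hx 0)

namespace WeakH1

lemma weakTendsto_steklov (u : WeakH1) {ε : ℕ → ℝ} (hε : ∀ n, 0 < ε n)
    (hlim : Tendsto ε atTop (𝓝 0)) :
    WeakTendsto (fun n => (u.inH1_steklov (hε n)).toWeakH1) u := by
  have hlim' : Tendsto ε atTop (𝓝[>] 0) :=
    tendsto_nhdsWithin_iff.2 ⟨hlim, Eventually.of_forall hε⟩
  refine .of_ae_tendsto (fun n => u.energy_steklov_le zero_le_one (hε n)) (fun x => ?_) ?_
  · exact (tendsto_steklov_of_hasDerivAt u.memLp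
      (u.continuous.integral_hasStrictDerivAt 0 x).hasDerivAt).comp hlim'
  · filter_upwards [ae_tendsto_steklov u.memLp_weakDeriv] with x hx
    exact (hx.comp hlim').congr fun n => (congrFun (u.weakDeriv_toWeakH1_steklov (hε n)) x).symm

end WeakH1

/-! ### The sharp trilinear inequality -/

namespace WeakTendsto

open WeakH1

variable {u v : ℕ → WeakH1} {φ ψ : WeakH1}

lemma tendsto_energy_sub_zero (hu : WeakTendsto u φ) {γ : ℝ} (hγ : 0 ≤ γ)
    (hle : ∀ n, energy γ (u n) ≤ energy γ φ) :
    Tendsto (fun n => energy γ (u n - φ)) atTop (𝓝 0) := by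
  have hgap : Tendsto (fun n => energy γ φ - (energy γ (u n) - energy γ (u n - φ))) atTop
      (𝓝 0) := by
    simpa only [sub_self] using (hu.tendsto_energy_sub_energy γ).const_sub (energy γ φ)
  exact squeeze_zero (fun n => energy_nonneg hγ) (fun n => by linarith [hle n]) hgap

lemma tendsto_cubic (hu : WeakTendsto u φ) (hv : WeakTendsto v ψ)
    (hu0 : Tendsto (fun n => energy 1 (u n - φ)) atTop (𝓝 0))
    (hv0 : Tendsto (fun n => energy 1 (v n - ψ)) atTop (𝓝 0)) :
    Tendsto (fun n => cubic (u n) (v n)) atTop (𝓝 (cubic φ ψ)) := by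
  have hbound : Tendsto (fun n => √(2 * energy 1 (v n - ψ)) * energy 1 (u n - φ)) atTop (𝓝 0) := by
    simpa only [mul_zero] using ((hv0.const_mul 2).sqrt).mul hu0
  have hres : Tendsto (fun n => cubic (u n - φ) (v n - ψ)) atTop (𝓝 0) :=
    squeeze_zero_norm (fun n => abs_cubic_le) hbound
  simpa only [sub_add_cancel, add_zero] using (hu.tendsto_cubic_sub_cubic hv).add hres

end WeakTendsto

namespace WeakH1

lemma energy_smul (u : WeakH1) (γ t : ℝ) : energy γ (t • u) = t ^ 2 * energy γ u := by
  simp only [energy, smul_apply, weakDeriv_smul_apply, mul_pow, integral_const_mul]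
  ring

lemma cubic_smul_smul (u v : WeakH1) (t : ℝ) : cubic (t • u) (t • v) = t ^ 3 * cubic u v := by
  simp only [cubic, smul_apply, ← integral_const_mul]
  congr 1 with x
  ring

end WeakH1

lemma surjective_pow_of_odd {n : ℕ} (hn : Odd n) : Function.Surjective fun s : ℝ => s ^ n := by
  refine (continuous_pow n).surjective (tendsto_pow_atTop hn.pos.ne') ?_
  refine (tendsto_neg_atTop_atBot.comp
    ((tendsto_pow_atTop hn.pos.ne').comp tendsto_neg_atBot_atTop)).congr fun s => ?_
  simp only [Function.comp_apply, hn.neg_pow, neg_neg]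

open WeakH1

variable {α β lam : ℝ}

lemma nonneg_of_mem_IvalSet (hα : 0 ≤ α) (hβ : 0 ≤ β) {m : ℝ} (hm : m ∈ IvalSet α β lam) :
    0 ≤ m := by
  obtain ⟨f, g, hf, hg, -, rfl⟩ := hm
  exact (add_nonneg (energy_nonneg hα) (energy_nonneg hβ)).trans_eq
    (Ifun_eq_energy hf.toWeakH1 hg.toWeakH1 α β).symm

lemma Mfun_nonneg (hα : 0 ≤ α) (hβ : 0 ≤ β) : 0 ≤ Mfun α β lam :=
  Real.sInf_nonneg fun _ => nonneg_of_mem_IvalSet hα hβ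

lemma Mfun_cubic_le_energy (hα : 0 ≤ α) (hβ : 0 ≤ β) {u v : WeakH1} (hu : Differentiable ℝ u)
    (hv : Differentiable ℝ v) : Mfun α β (cubic u v) ≤ energy α u + energy β v :=
  csInf_le ⟨0, fun _ => nonneg_of_mem_IvalSet hα hβ⟩
    ⟨u, v, u.inH1_of_differentiable hu, v.inH1_of_differentiable hv, rfl, Ifun_eq_energy u v α β⟩

lemma Mfun_pow_three_mul_cubic_sq_le_of_differentiable (hα : 0 ≤ α) (hβ : 0 ≤ β) {u v : WeakH1}
    (hu : Differentiable ℝ u) (hv : Differentiable ℝ v) :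
    Mfun α β lam ^ 3 * cubic u v ^ 2 ≤ lam ^ 2 * (energy α u + energy β v) ^ 3 := by
  have hE : 0 ≤ energy α u + energy β v := add_nonneg (energy_nonneg hα) (energy_nonneg hβ)
  rcases eq_or_ne (cubic u v) 0 with hN | hN
  · rw [hN, zero_pow two_ne_zero, mul_zero]
    positivity
  obtain ⟨s, hs : s ^ 3 = lam / cubic u v⟩ := surjective_pow_of_odd ⟨1, rfl⟩ (lam / cubic u v)
  have hlam : lam = s ^ 3 * cubic u v := by rw [hs, div_mul_cancel₀ _ hN]
  have hle : Mfun α β lam ≤ s ^ 2 * (energy α u + energy β v) := by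
    have hdiff {w : WeakH1} (hw : Differentiable ℝ w) : Differentiable ℝ (s • w : WeakH1) :=
      hw.const_mul s
    have hscaled := Mfun_cubic_le_energy hα hβ (hdiff hu) (hdiff hv)
    rwa [cubic_smul_smul, ← hlam, energy_smul, energy_smul, ← mul_add] at hscaled
  calc Mfun α β lam ^ 3 * cubic u v ^ 2
      ≤ (s ^ 2 * (energy α u + energy β v)) ^ 3 * cubic u v ^ 2 := by
        have := Mfun_nonneg (lam := lam) hα hβ
        gcongr
    _ = lam ^ 2 * (energy α u + energy β v) ^ 3 := by rw [hlam]; ring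

/-- Scaling a pair to satisfy the constraint turns the definition of `Mfun` into an inequality
homogeneous of degree six; Steklov averages, along which energies do not increase, then allow pairs
that are not differentiable everywhere. -/
lemma Mfun_pow_three_mul_cubic_sq_le (hα : 0 ≤ α) (hβ : 0 ≤ β) (u v : WeakH1) :
    Mfun α β lam ^ 3 * cubic u v ^ 2 ≤ lam ^ 2 * (energy α u + energy β v) ^ 3 := by
  have hpos (n : ℕ) : (0 : ℝ) < 1 / (n + 1) := Nat.one_div_pos_of_nat
  have hu := u.weakTendsto_steklov hpos tendsto_one_div_add_atTop_nhds_zero_nat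
  have hv := v.weakTendsto_steklov hpos tendsto_one_div_add_atTop_nhds_zero_nat
  have hcubic := hu.tendsto_cubic hv
    (hu.tendsto_energy_sub_zero zero_le_one fun n => u.energy_steklov_le zero_le_one (hpos n))
    (hv.tendsto_energy_sub_zero zero_le_one fun n => v.energy_steklov_le zero_le_one (hpos n))
  refine le_of_tendsto' ((hcubic.pow 2).const_mul _) fun n => ?_
  refine (Mfun_pow_three_mul_cubic_sq_le_of_differentiable hα hβ (u.inH1_steklov (hpos n)).1
    (v.inH1_steklov (hpos n)).1).trans ?_
  have hnonneg := add_nonneg (energy_nonneg hα (u := (u.inH1_steklov (hpos n)).toWeakH1))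
    (energy_nonneg hβ (u := (v.inH1_steklov (hpos n)).toWeakH1))
  gcongr
  · exact u.energy_steklov_le hα (hpos n)
  · exact v.energy_steklov_le hβ (hpos n)

/-! ### Compactness of centred minimizing sequences -/

section PieceBounds

variable {M B x c : ℝ}

lemma mul_mul_abs_sq_le (h : M ^ 3 * x ^ 2 ≤ c ^ 2 * B ^ 3) :
    M * (M * |x|) ^ 2 ≤ B * (|c| * B) ^ 2 := by
  simp only [mul_pow, sq_abs]
  linarith

lemma mul_abs_le_of_pow_three_mul_sq_le (hM : 0 < M) (hB : 0 ≤ B) (hBM : B ≤ M)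
    (h : M ^ 3 * x ^ 2 ≤ c ^ 2 * B ^ 3) : M * |x| ≤ |c| * B := by
  refine (pow_le_pow_iff_left₀ (by positivity) (by positivity) two_ne_zero).1 ?_
  exact le_of_mul_le_mul_left ((mul_mul_abs_sq_le h).trans (by gcongr)) hM

lemma mul_abs_lt_of_pow_three_mul_sq_le (hB : 0 < B) (hBM : B < M) (hc : c ≠ 0)
    (h : M ^ 3 * x ^ 2 ≤ c ^ 2 * B ^ 3) : M * |x| < |c| * B := by
  refine lt_of_pow_lt_pow_left₀ 2 (by positivity) ?_
  exact lt_of_mul_lt_mul_left ((mul_mul_abs_sq_le h).trans_lt (by gcongr)) (hB.trans hBM).le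

end PieceBounds

/-- Strict subadditivity: for `0 < A < M` the masses `a` and `c - a` of the two pieces would satisfy
`M |a| < |c| A` and `M |c - a| ≤ |c| (M - A)`, contradicting `|c| ≤ |a| + |c - a|`. -/
lemma eq_and_eq_of_pow_three_mul_sq_le {M A a c : ℝ} (hA : 0 < A) (hAM : A ≤ M) (hc : c ≠ 0)
    (ha : M ^ 3 * a ^ 2 ≤ c ^ 2 * A ^ 3) (hca : M ^ 3 * (c - a) ^ 2 ≤ c ^ 2 * (M - A) ^ 3) :
    A = M ∧ a = c := by
  have hM : 0 < M := hA.trans_le hAM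
  have hrest := mul_abs_le_of_pow_three_mul_sq_le hM (sub_nonneg.2 hAM)
    (sub_le_self M hA.le) hca
  have hAM' : A = M := by
    by_contra hne
    have hpiece := mul_abs_lt_of_pow_three_mul_sq_le hA (hAM.lt_of_ne hne) hc ha
    have htri : M * |c| ≤ M * (|a| + |c - a|) := by
      gcongr
      simpa only [add_sub_cancel] using abs_add_le a (c - a)
    linarith
  rw [hAM', sub_self, mul_zero] at hrest
  refine ⟨hAM', (sub_eq_zero.1 (abs_nonpos_iff.1 ?_)).symm⟩
  exact le_of_mul_le_mul_left (by simpa only [mul_zero] using hrest) hM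

namespace WeakH1

lemma energy_pos_of_apply_ne_zero {γ : ℝ} (hγ : 0 < γ) {u : WeakH1} {x : ℝ} (hx : u x ≠ 0) :
    0 < energy γ u := by
  have hsq : 0 < u x ^ 2 := by positivity
  have hle : u x ^ 2 ≤ 2 * ((1 + γ⁻¹) * energy γ u) :=
    (sq_apply_le_energy x).trans (mul_le_mul_of_nonneg_left (energy_one_le hγ) zero_le_two)
  exact pos_of_mul_pos_right (hsq.trans_le (hle.trans_eq (mul_assoc _ _ _).symm)) (by positivity)

lemma exists_lt_abs_apply {c : ℝ} {u v : WeakH1} (h : c * ∫ x, u x ^ 2 < |cubic u v|) :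
    ∃ y, c < |v y| := by
  contrapose! h
  exact abs_cubic_le_of_abs_le h

lemma exists_eventually_lt_abs_apply {u v : ℕ → WeakH1} {C lam : ℝ} (hlam : lam ≠ 0)
    (hC : ∀ n, energy 1 (u n) ≤ C)
    (hcubic : Tendsto (fun n => cubic (u n) (v n)) atTop (𝓝 lam)) :
    ∃ c > 0, ∃ y : ℕ → ℝ, ∀ᶠ n in atTop, c < |v n (y n)| := by
  have hC0 : 0 ≤ C := (energy_nonneg zero_le_one).trans (hC 0)
  have hlt : |lam| / (C + 1) * C < |lam| := by
    rw [div_mul_eq_mul_div, div_lt_iff₀ (by positivity)]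
    exact mul_lt_mul_of_pos_left (lt_add_one C) (abs_pos.2 hlam)
  refine ⟨|lam| / (C + 1), by positivity, Eventually.choice (r := fun n y => _ < |v n y|) ?_⟩
  filter_upwards [hcubic.abs.eventually (lt_mem_nhds hlt)] with n hn
  refine exists_lt_abs_apply (lt_of_le_of_lt ?_ hn)
  gcongr
  exact integral_sq_le_energy_one.trans (hC n)

end WeakH1

lemma Mfun_zero (hα : 0 ≤ α) (hβ : 0 ≤ β) : Mfun α β 0 = 0 := by
  refine le_antisymm ?_ (Mfun_nonneg hα hβ)
  have hzero : Differentiable ℝ (0 : WeakH1) := differentiable_const 0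
  simpa only [cubic_zero_left, energy_zero, add_zero] using Mfun_cubic_le_energy hα hβ hzero hzero

/-- Minimizing pairs of the constrained problem, in the larger space `WeakH1`. -/
def IsMinimizer (α β lam : ℝ) (φ ψ : WeakH1) : Prop :=
  energy α φ + energy β ψ = Mfun α β lam ∧ cubic φ ψ = lam

section Compactness

variable {u v : ℕ → WeakH1} {φ ψ : WeakH1}

lemma isMinimizer_of_weakTendsto (hα : 0 ≤ α) (hβ : 0 ≤ β) (hlam : lam ≠ 0)
    (hu : WeakTendsto u φ) (hv : WeakTendsto v ψ) (hpos : 0 < energy α φ + energy β ψ)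
    (henergy : Tendsto (fun n => energy α (u n) + energy β (v n)) atTop (𝓝 (Mfun α β lam)))
    (hcubic : Tendsto (fun n => cubic (u n) (v n)) atTop (𝓝 lam)) : IsMinimizer α β lam φ ψ := by
  have hres : Tendsto (fun n => energy α (u n - φ) + energy β (v n - ψ)) atTop
      (𝓝 (Mfun α β lam - (energy α φ + energy β ψ))) :=
    (henergy.sub ((hu.tendsto_energy_sub_energy α).add (hv.tendsto_energy_sub_energy β))).congr
      fun n => by ring
  have hcubic_res : Tendsto (fun n => cubic (u n - φ) (v n - ψ)) atTop
      (𝓝 (lam - cubic φ ψ)) :=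
    (hcubic.sub (hu.tendsto_cubic_sub_cubic hv)).congr fun n => by ring
  have hle : energy α φ + energy β ψ ≤ Mfun α β lam := sub_nonneg.1
    (ge_of_tendsto' hres fun n => add_nonneg (energy_nonneg hα) (energy_nonneg hβ))
  exact eq_and_eq_of_pow_three_mul_sq_le hpos hle hlam (Mfun_pow_three_mul_cubic_sq_le hα hβ φ ψ)
    (le_of_tendsto_of_tendsto' ((hcubic_res.pow 2).const_mul _) ((hres.pow 3).const_mul _)
      fun n => Mfun_pow_three_mul_cubic_sq_le hα hβ _ _)

lemma tendsto_energy_zero_of_tendsto_add (hα : 0 ≤ α) (hβ : 0 ≤ β)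
    (h : Tendsto (fun n => energy α (u n) + energy β (v n)) atTop (𝓝 0)) :
    Tendsto (fun n => energy α (u n)) atTop (𝓝 0) ∧
      Tendsto (fun n => energy β (v n)) atTop (𝓝 0) :=
  ⟨squeeze_zero (fun _ => energy_nonneg hα) (fun _ => le_add_of_nonneg_right (energy_nonneg hβ)) h,
    squeeze_zero (fun _ => energy_nonneg hβ) (fun _ => le_add_of_nonneg_left (energy_nonneg hα)) h⟩

lemma tendsto_energy_sub_zero_of_tendsto_add (hα : 0 ≤ α) (hβ : 0 ≤ β)
    (hu : WeakTendsto u φ) (hv : WeakTendsto v ψ)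
    (henergy : Tendsto (fun n => energy α (u n) + energy β (v n)) atTop
      (𝓝 (energy α φ + energy β ψ))) :
    Tendsto (fun n => energy α (u n - φ)) atTop (𝓝 0) ∧
      Tendsto (fun n => energy β (v n - ψ)) atTop (𝓝 0) := by
  refine tendsto_energy_zero_of_tendsto_add hα hβ ?_
  have hres :=
    henergy.sub ((hu.tendsto_energy_sub_energy α).add (hv.tendsto_energy_sub_energy β))
  rw [sub_self] at hres
  exact hres.congr fun n => by ring

lemma exists_energy_one_le_of_tendsto (hα : 0 < α) (hβ : 0 ≤ β) {m : ℝ}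
    (henergy : Tendsto (fun n => energy α (u n) + energy β (v n)) atTop (𝓝 m)) :
    ∃ C, ∀ n, energy 1 (u n) ≤ C := by
  obtain ⟨B, hB⟩ := henergy.bddAbove_range
  refine ⟨(1 + α⁻¹) * B, fun n => (energy_one_le hα).trans ?_⟩
  gcongr
  exact (le_add_of_nonneg_right (energy_nonneg hβ)).trans (hB (mem_range_self n))

lemma exists_subseq_of_centred (hα : 0 < α) (hβ : 0 < β) (hlam : lam ≠ 0)
    (henergy : Tendsto (fun n => energy α (u n) + energy β (v n)) atTop (𝓝 (Mfun α β lam)))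
    (hcubic : Tendsto (fun n => cubic (u n) (v n)) atTop (𝓝 lam)) {c : ℝ} (hc : 0 < c)
    (hcentre : ∀ᶠ n in atTop, c < |v n 0|) :
    ∃ (ns : ℕ → ℕ) (φ ψ : WeakH1), StrictMono ns ∧ IsMinimizer α β lam φ ψ ∧
      Tendsto (fun k => energy α (u (ns k) - φ)) atTop (𝓝 0) ∧
      Tendsto (fun k => energy β (v (ns k) - ψ)) atTop (𝓝 0) := by
  obtain ⟨B, hB⟩ := exists_energy_one_le_of_tendsto hα hβ.le henergy
  obtain ⟨C, hC⟩ := exists_energy_one_le_of_tendsto hβ hα.le (henergy.congr fun n => add_comm _ _)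
  obtain ⟨φ, ns, hns, hφ⟩ := WeakTendsto.exists_subseq hB
  obtain ⟨ψ, ms, hms, hψ⟩ := WeakTendsto.exists_subseq fun n => hC (ns n)
  replace hφ := hφ.comp_strictMono hms
  have hsub := (hns.comp hms).tendsto_atTop
  have hψ0 : ψ 0 ≠ 0 := abs_pos.1 <| hc.trans_le <|
    ge_of_tendsto (hψ.tendsto_apply 0).abs ((hsub.eventually hcentre).mono fun _ => le_of_lt)
  have hpos : 0 < energy α φ + energy β ψ :=
    add_pos_of_nonneg_of_pos (energy_nonneg hα.le) (energy_pos_of_apply_ne_zero hβ hψ0)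
  have hmin := isMinimizer_of_weakTendsto hα.le hβ.le hlam hφ hψ hpos (henergy.comp hsub)
    (hcubic.comp hsub)
  refine ⟨ns ∘ ms, φ, ψ, hns.comp hms, hmin, ?_⟩
  refine tendsto_energy_sub_zero_of_tendsto_add hα.le hβ.le hφ hψ ?_
  rw [hmin.1]
  exact henergy.comp hsub

lemma exists_subseq_translate_tendsto (hα : 0 < α) (hβ : 0 < β)
    (henergy : Tendsto (fun n => energy α (u n) + energy β (v n)) atTop (𝓝 (Mfun α β lam)))
    (hcubic : Tendsto (fun n => cubic (u n) (v n)) atTop (𝓝 lam)) :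
    ∃ (ns : ℕ → ℕ) (y : ℕ → ℝ) (φ ψ : WeakH1), StrictMono ns ∧ IsMinimizer α β lam φ ψ ∧
      Tendsto (fun k => energy α ((u (ns k)).translate (y k) - φ)) atTop (𝓝 0) ∧
      Tendsto (fun k => energy β ((v (ns k)).translate (y k) - ψ)) atTop (𝓝 0) := by
  rcases eq_or_ne lam 0 with rfl | hlam
  · have hmin : IsMinimizer α β 0 0 0 := by
      simp only [IsMinimizer, energy_zero, add_zero, Mfun_zero hα.le hβ.le, cubic_zero_left,
        and_self]
    rw [Mfun_zero hα.le hβ.le] at henergy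
    refine ⟨id, 0, 0, 0, strictMono_id, hmin, ?_⟩
    simpa only [sub_zero, energy_translate, id] using
      tendsto_energy_zero_of_tendsto_add hα.le hβ.le henergy
  obtain ⟨C, hC⟩ := exists_energy_one_le_of_tendsto hα hβ.le henergy
  obtain ⟨c, hc, y, hy⟩ := exists_eventually_lt_abs_apply hlam hC hcubic
  obtain ⟨ns, φ, ψ, hns, hmin, hφ, hψ⟩ := exists_subseq_of_centred hα hβ hlam
    (u := fun n => (u n).translate (y n)) (v := fun n => (v n).translate (y n))
    (by simpa only [energy_translate] using henergy) (by simpa only [cubic_translate] using hcubic)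
    hc (by simpa only [WeakH1.translate_apply, zero_add] using hy)
  exact ⟨ns, y ∘ ns, φ, ψ, hns, hmin, hφ, hψ⟩

end Compactness

/-! ### Regularity of weak solutions -/

lemma intervalIntegral_indicator_Ioc_eq_zero {ζ : ℝ → ℝ} {a b : ℝ}
    (hmean : ∫ t in Ioc a b, ζ t = 0) {x : ℝ} (hx : x ∉ Ioo a b) :
    ∫ t in a..x, (Ioc a b).indicator ζ t = 0 := by
  rcases le_or_gt x a with hxa | hax
  · rw [intervalIntegral.integral_of_ge hxa, setIntegral_eq_zero_of_forall_eq_zero, neg_zero]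
    exact fun t ht => indicator_of_notMem (fun h => h.1.not_ge ht.2) _
  · have hbx : b ≤ x := not_lt.1 fun hxb => hx ⟨hax, hxb⟩
    rw [intervalIntegral.integral_of_le hax.le, setIntegral_indicator measurableSet_Ioc,
      inter_eq_right.2 (Ioc_subset_Ioc_right hbx), hmean]

namespace WeakH1

lemma exists_weakDeriv_eq_indicator {ζ : ℝ → ℝ} {a b : ℝ}
    (hζ : MemLp ζ 2 (volume.restrict (Ioc a b))) (hmean : ∫ x in Ioc a b, ζ x = 0) :
    ∃ η : WeakH1, η.weakDeriv = (Ioc a b).indicator ζ ∧ ∀ x ∉ Ioo a b, η x = 0 := by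
  have hζ' := (memLp_indicator_iff_restrict measurableSet_Ioc).2 hζ
  have hint := intervalIntegrable_of_memLp_two hζ'
  have hzero x (hx : x ∉ Ioo a b) := intervalIntegral_indicator_Ioc_eq_zero hmean hx
  have hcompact : HasCompactSupport fun x => ∫ t in a..x, (Ioc a b).indicator ζ t :=
    .intro isCompact_Icc fun x hx => hzero x fun h => hx (Ioo_subset_Icc_self h)
  have hcont := intervalIntegral.continuous_primitive hint a
  exact ⟨⟨(fun x => ∫ t in a..x, (Ioc a b).indicator ζ t, (Ioc a b).indicator ζ),
    hcont.memLp_of_hasCompactSupport hcompact, hζ',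
    fun s t => (intervalIntegral.integral_interval_sub_left (hint _ _) (hint _ _)).symm⟩,
    rfl, hzero⟩

lemma integral_primitive_mul_weakDeriv {F : ℝ → ℝ} (hF : Continuous F) {η : WeakH1} {a b : ℝ}
    (ha : η a = 0) (hb : η b = 0) :
    ∫ x in a..b, (∫ t in a..x, F t) * η.weakDeriv x = -∫ x in a..b, F x * η x := by
  have hFac := (hF.intervalIntegrable a b).absolutelyContinuousOnInterval_intervalIntegral
    (c := a) left_mem_uIcc
  have hηac : AbsolutelyContinuousOnInterval η a b := by
    rw [η.eq_add_integral_weakDeriv a, ha]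
    simpa only [zero_add] using (intervalIntegrable_of_memLp_two η.memLp_weakDeriv a
      b).absolutelyContinuousOnInterval_intervalIntegral left_mem_uIcc
  have hparts := hFac.integral_mul_deriv_eq_deriv_mul hηac
  simp only [ha, hb, mul_zero, sub_zero, zero_sub, hF.deriv_integral] at hparts
  rw [← hparts]
  refine intervalIntegral.integral_congr_ae ?_
  filter_upwards [η.deriv_ae_eq] with x hx _
  rw [hx]

variable {u : WeakH1} {F : ℝ → ℝ}

lemma integral_weakDeriv_add_primitive_mul_eq_zero (hF : Continuous F)
    (h : ∀ η : WeakH1, ∫ x, u.weakDeriv x * η.weakDeriv x = ∫ x, F x * η x) {a b : ℝ}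
    (hab : a ≤ b) {ζ : ℝ → ℝ} (hζ : MemLp ζ 2 (volume.restrict (Ioc a b)))
    (hmean : ∫ x in Ioc a b, ζ x = 0) :
    ∫ x in Ioc a b, (u.weakDeriv x + ∫ t in a..x, F t) * ζ x = 0 := by
  obtain ⟨η, hηζ, hη⟩ := exists_weakDeriv_eq_indicator hζ hmean
  have hη' : ∀ x ∉ Ioc a b, u.weakDeriv x * η.weakDeriv x = 0 := fun x hx => by
    rw [hηζ, indicator_of_notMem hx, mul_zero]
  have hFη : ∀ x ∉ Ioc a b, F x * η x = 0 := fun x hx => by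
    rw [hη x fun hx' => hx (Ioo_subset_Ioc_self hx'), mul_zero]
  have hprimitive := intervalIntegral.continuous_primitive (μ := volume) hF.intervalIntegrable a
  calc ∫ x in Ioc a b, (u.weakDeriv x + ∫ t in a..x, F t) * ζ x
      = ∫ x in a..b, (u.weakDeriv x * η.weakDeriv x + (∫ t in a..x, F t) * η.weakDeriv x) := by
        rw [intervalIntegral.integral_of_le hab]
        refine setIntegral_congr_fun measurableSet_Ioc fun x hx => ?_
        simp only [hηζ, indicator_of_mem hx, add_mul]
    _ = (∫ x, F x * η x) - ∫ x, F x * η x := by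
        rw [intervalIntegral.integral_add, integral_primitive_mul_weakDeriv hF
          (hη a left_notMem_Ioo) (hη b right_notMem_Ioo), intervalIntegral.integral_of_le hab,
          intervalIntegral.integral_of_le hab, setIntegral_eq_integral_of_forall_compl_eq_zero hη',
          setIntegral_eq_integral_of_forall_compl_eq_zero hFη, h, sub_eq_add_neg]
        · exact (u.memLp_weakDeriv.integrable_mul η.memLp_weakDeriv).intervalIntegrable
        · exact (intervalIntegrable_of_memLp_two η.memLp_weakDeriv a b).continuousOn_mul
            hprimitive.continuousOn
    _ = 0 := sub_self _

/-- On a bounded interval the equation says that `u'` plus a primitive of `F` is orthogonal to all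
functions of mean zero. -/
lemma exists_ae_weakDeriv_eq_sub_primitive (hF : Continuous F)
    (h : ∀ η : WeakH1, ∫ x, u.weakDeriv x * η.weakDeriv x = ∫ x, F x * η x) {a b : ℝ}
    (hab : a ≤ b) :
    ∃ c, ∀ᵐ x ∂volume.restrict (Ioc a b), u.weakDeriv x = c - ∫ t in a..x, F t := by
  have hprimitive := intervalIntegral.continuous_primitive (μ := volume) hF.intervalIntegrable a
  have hmemLp : MemLp (fun x => ∫ t in a..x, F t) 2 (volume.restrict (Ioc a b)) :=
    (memLp_two_iff_integrable_sq hprimitive.aestronglyMeasurable).2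
      (hprimitive.pow 2).integrableOn_Ioc
  obtain ⟨c, hc⟩ := exists_ae_eq_const_of_forall_integral_mul_eq_zero
    ((u.memLp_weakDeriv.restrict _).add hmemLp)
    fun ζ hζ hmean => integral_weakDeriv_add_primitive_mul_eq_zero hF h hab hζ hmean
  exact ⟨c, hc.mono fun x hx => eq_sub_of_add_eq hx⟩

lemma differentiable_of_forall_integral_eq (hF : Continuous F)
    (h : ∀ η : WeakH1, ∫ x, u.weakDeriv x * η.weakDeriv x = ∫ x, F x * η x) :
    Differentiable ℝ u := by
  intro x
  obtain ⟨c, hc⟩ := exists_ae_weakDeriv_eq_sub_primitive hF h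
    (show x - 1 ≤ x + 1 by linarith)
  set G := fun y => ∫ t in (x - 1)..y, F t
  have hG : Continuous fun y => c - G y :=
    continuous_const.sub (intervalIntegral.continuous_primitive hF.intervalIntegrable _)
  have hu : u =ᶠ[𝓝 x] fun y => u (x - 1) + ∫ t in (x - 1)..y, (c - G t) := by
    filter_upwards [Ioo_mem_nhds (sub_one_lt x) (lt_add_one x)] with y hy
    have hint : ∫ t in (x - 1)..y, u.weakDeriv t = ∫ t in (x - 1)..y, (c - G t) := by
      simp only [intervalIntegral.integral_of_le hy.1.le]
      exact integral_congr_ae (ae_restrict_of_ae_restrict_of_subset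
        (Ioc_subset_Ioc_right hy.2.le) hc)
    rw [← hint, integral_weakDeriv, add_sub_cancel]
  exact ((hG.integral_hasStrictDerivAt _ x).hasDerivAt.differentiableAt.const_add
    _).congr_of_eventuallyEq hu

end WeakH1

/-! ### Minimizers are differentiable -/

/-- The difference of the two sides of `h` is minimal at `t = 0`, where it vanishes. -/
lemma mul_eq_of_forall_pow_three_mul_sq_le {M lam D R L Q : ℝ} (hM : M ≠ 0) (hlam : lam ≠ 0)
    (h : ∀ t, M ^ 3 * (lam + t * D + t ^ 2 * R) ^ 2 ≤ lam ^ 2 * (M + 2 * t * L + t ^ 2 * Q) ^ 3) :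
    M * D = 3 * lam * L := by
  let gap t := lam ^ 2 * (M + 2 * t * L + t ^ 2 * Q) ^ 3 - M ^ 3 * (lam + t * D + t ^ 2 * R) ^ 2
  have hmin : IsLocalMin gap 0 := Eventually.of_forall fun t => by
    have hzero : gap 0 = 0 := by simp only [gap]; ring
    exact hzero.trans_le (sub_nonneg.2 (h t))
  have hquad (a b c : ℝ) : HasDerivAt (fun t => a + t * b + t ^ 2 * c) b 0 := by
    simpa using (((hasDerivAt_id (0 : ℝ)).mul_const b).const_add a).fun_add
      ((hasDerivAt_pow 2 (0 : ℝ)).mul_const c)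
  have hgap : HasDerivAt gap (lam ^ 2 * (3 * M ^ 2 * (2 * L)) - M ^ 3 * (2 * lam * D)) 0 := by
    have hcube := ((hquad M (2 * L) Q).pow 3).const_mul (lam ^ 2)
    have hsquare := ((hquad lam D R).pow 2).const_mul (M ^ 3)
    refine (hcube.sub hsquare).congr_deriv ?_ |>.congr_of_eventuallyEq ?_
    · norm_num
    · exact Eventually.of_forall fun t => by simp only [gap, Pi.sub_apply, Pi.pow_apply]; ring
  have hderiv := hmin.hasDerivAt_eq_zero hgap
  refine mul_left_cancel₀ (mul_ne_zero (mul_ne_zero two_ne_zero hlam) (pow_ne_zero 2 hM)) ?_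
  linear_combination -hderiv

lemma WeakH1.differentiable_of_forall_energyForm_eq {γ : ℝ} {u : WeakH1} {F : ℝ → ℝ}
    (hF : Continuous F) (hF2 : MemLp F 2)
    (h : ∀ η : WeakH1, energyForm γ u η = ∫ x, F x * η x) : Differentiable ℝ u := by
  have hcont : Continuous fun x => F x - γ * u x := hF.sub (u.continuous.const_mul γ)
  refine differentiable_of_forall_integral_eq hcont fun η => ?_
  have hFη : Integrable fun x => F x * η x := hF2.integrable_mul η.memLp
  have huη : Integrable fun x => γ * (u x * η x) := (u.memLp.integrable_mul η.memLp).const_mul γ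
  simp only [sub_mul, mul_assoc]
  rw [integral_sub hFη huη, integral_const_mul, ← h η, energyForm, add_sub_cancel_right]

lemma WeakH1.eq_zero_of_energy_eq_zero {γ : ℝ} (hγ : 0 < γ) {u : WeakH1} (h : energy γ u = 0) :
    (u : ℝ → ℝ) = 0 :=
  funext fun _ => of_not_not fun hx => (energy_pos_of_apply_ne_zero hγ hx).ne' h

namespace IsMinimizer

variable {φ ψ : WeakH1}

lemma mul_integral_eq (h : IsMinimizer α β lam φ ψ) (hα : 0 ≤ α) (hβ : 0 ≤ β)
    (hM : Mfun α β lam ≠ 0) (hlam : lam ≠ 0) (η : WeakH1) :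
    Mfun α β lam * (2 * ∫ x, φ x * η x * ψ x) = 3 * lam * energyForm α φ η := by
  refine mul_eq_of_forall_pow_three_mul_sq_le (R := cubic η ψ) (Q := energy α η) hM hlam
    fun t => ?_
  have hle := Mfun_pow_three_mul_cubic_sq_le (lam := lam) hα hβ (φ + t • η) ψ
  rw [energy_add_smul, cubic_add_smul_left, h.2] at hle
  rw [← h.1] at hle ⊢
  convert hle using 3 <;> ring

lemma mul_cubic_eq (h : IsMinimizer α β lam φ ψ) (hα : 0 ≤ α) (hβ : 0 ≤ β)
    (hM : Mfun α β lam ≠ 0) (hlam : lam ≠ 0) (η : WeakH1) :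
    Mfun α β lam * cubic φ η = 3 * lam * energyForm β ψ η := by
  refine mul_eq_of_forall_pow_three_mul_sq_le (R := 0) (Q := energy β η) hM hlam fun t => ?_
  have hle := Mfun_pow_three_mul_cubic_sq_le (lam := lam) hα hβ φ (ψ + t • η)
  rw [energy_add_smul, cubic_add_smul_right, h.2] at hle
  rw [← h.1] at hle ⊢
  convert hle using 3 <;> ring

lemma differentiable_of_Mfun_ne_zero (h : IsMinimizer α β lam φ ψ) (hα : 0 ≤ α) (hβ : 0 ≤ β)
    (hM : Mfun α β lam ≠ 0) : Differentiable ℝ φ ∧ Differentiable ℝ ψ := by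
  have hlam : lam ≠ 0 := by
    rintro rfl
    exact hM (Mfun_zero hα hβ)
  set κ := Mfun α β lam / (3 * lam) with hκ
  constructor
  · refine differentiable_of_forall_energyForm_eq (γ := α) (F := fun x => 2 * κ * (φ x * ψ x))
      ((φ.continuous.mul ψ.continuous).const_mul _) ((memLp_mul φ ψ).const_mul _) fun η => ?_
    calc energyForm α φ η = 2 * κ * ∫ x, φ x * η x * ψ x := by
          rw [hκ]
          field_simp
          linear_combination -h.mul_integral_eq hα hβ hM hlam η
      _ = ∫ x, 2 * κ * (φ x * ψ x) * η x := by
          rw [← integral_const_mul]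
          congr 1 with x
          ring
  · refine differentiable_of_forall_energyForm_eq (γ := β) (F := fun x => κ * (φ x * φ x))
      ((φ.continuous.mul φ.continuous).const_mul _) ((memLp_mul φ φ).const_mul _) fun η => ?_
    calc energyForm β ψ η = κ * cubic φ η := by
          rw [hκ]
          field_simp
          linear_combination -h.mul_cubic_eq hα hβ hM hlam η
      _ = ∫ x, κ * (φ x * φ x) * η x := by
          simp only [cubic, pow_two, ← integral_const_mul, mul_assoc]

lemma differentiable (h : IsMinimizer α β lam φ ψ) (hα : 0 < α) (hβ : 0 < β) :
    Differentiable ℝ φ ∧ Differentiable ℝ ψ := by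
  rcases ne_or_eq (Mfun α β lam) 0 with hM | hM
  · exact h.differentiable_of_Mfun_ne_zero hα.le hβ.le hM
  obtain ⟨hφ, hψ⟩ := (add_eq_zero_iff_of_nonneg (energy_nonneg hα.le) (energy_nonneg hβ.le)).1
    (h.1.trans hM)
  rw [eq_zero_of_energy_eq_zero hα hφ, eq_zero_of_energy_eq_zero hβ hψ]
  exact ⟨differentiable_const 0, differentiable_const 0⟩

end IsMinimizer

lemma WeakH1.tendsto_integral_sq_of_tendsto_energy {γ : ℝ} (hγ : 0 < γ) {w : ℕ → WeakH1}
    (h : Tendsto (fun k => energy γ (w k)) atTop (𝓝 0)) :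
    Tendsto (fun k => ∫ x, w k x ^ 2) atTop (𝓝 0) ∧
      Tendsto (fun k => ∫ x, (w k).weakDeriv x ^ 2) atTop (𝓝 0) :=
  ⟨squeeze_zero (fun _ => integral_nonneg fun _ => sq_nonneg _)
      (fun _ => integral_sq_le_energy_div hγ) (by simpa only [zero_div] using h.div_const γ),
    squeeze_zero (fun _ => integral_nonneg fun _ => sq_nonneg _)
      (fun _ => integral_weakDeriv_sq_le_energy hγ.le) h⟩

lemma WeakH1.tendsto_integral_sq_translate_sub {γ : ℝ} (hγ : 0 < γ) {f : ℕ → ℝ → ℝ}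
    (hf : ∀ k, InH1 (f k)) {y : ℕ → ℝ} {φ : WeakH1}
    (h : Tendsto (fun k => energy γ ((hf k).toWeakH1.translate (y k) - φ)) atTop (𝓝 0)) :
    Tendsto (fun k => ∫ x, (f k (x + y k) - φ x) ^ 2) atTop (𝓝 0) ∧
      Tendsto (fun k => ∫ x, (deriv (f k) (x + y k) - deriv φ x) ^ 2) atTop (𝓝 0) := by
  obtain ⟨hfun, hderiv⟩ := tendsto_integral_sq_of_tendsto_energy hγ h
  refine ⟨hfun, hderiv.congr fun k => integral_congr_ae ?_⟩
  filter_upwards [φ.deriv_ae_eq] with x hx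
  rw [hx]
  rfl

theorem minimizing_seq_compact_up_to_translation_general (α₀ β₀ lam : ℝ)
    (hα : 0 < α₀) (hβ : 0 < β₀)
    (f g : ℕ → ℝ → ℝ) (hf : ∀ n, InH1 (f n)) (hg : ∀ n, InH1 (g n))
    (hconstr : Tendsto (fun n => ∫ x : ℝ, f n x ^ 2 * g n x) atTop (𝓝 lam))
    (hmin : Tendsto (fun n => Ifun α₀ β₀ (f n) (g n)) atTop (𝓝 (Mfun α₀ β₀ lam))) :
    ∃ (nk : ℕ → ℕ) (y : ℕ → ℝ) (φ ψ : ℝ → ℝ), StrictMono nk ∧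
      InH1 φ ∧ InH1 ψ ∧ (∫ x : ℝ, φ x ^ 2 * ψ x) = lam ∧
      Ifun α₀ β₀ φ ψ = Mfun α₀ β₀ lam ∧
      Tendsto (fun k => ∫ x : ℝ, (f (nk k) (x + y k) - φ x) ^ 2) atTop (𝓝 0) ∧
      Tendsto (fun k => ∫ x : ℝ, (deriv (f (nk k)) (x + y k) - deriv φ x) ^ 2) atTop (𝓝 0) ∧
      Tendsto (fun k => ∫ x : ℝ, (g (nk k) (x + y k) - ψ x) ^ 2) atTop (𝓝 0) ∧
      Tendsto (fun k => ∫ x : ℝ, (deriv (g (nk k)) (x + y k) - deriv ψ x) ^ 2) atTop (𝓝 0) := by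
  have henergy : Tendsto
      (fun n => energy α₀ (hf n).toWeakH1 + energy β₀ (hg n).toWeakH1) atTop
      (𝓝 (Mfun α₀ β₀ lam)) := hmin.congr fun n => Ifun_eq_energy (hf n).toWeakH1 _ α₀ β₀
  obtain ⟨nk, y, φ, ψ, hnk, hφψ, hφ_lim, hψ_lim⟩ :=
    exists_subseq_translate_tendsto hα hβ henergy hconstr
  obtain ⟨hφ, hψ⟩ := hφψ.differentiable hα hβ
  obtain ⟨hf_fun, hf_deriv⟩ := tendsto_integral_sq_translate_sub hα (fun k => hf (nk k)) hφ_lim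
  obtain ⟨hg_fun, hg_deriv⟩ := tendsto_integral_sq_translate_sub hβ (fun k => hg (nk k)) hψ_lim
  exact ⟨nk, y, φ, ψ, hnk, φ.inH1_of_differentiable hφ, ψ.inH1_of_differentiable hψ, hφψ.2,
    (Ifun_eq_energy φ ψ α₀ β₀).trans hφψ.1, hf_fun, hf_deriv, hg_fun, hg_deriv⟩

/-- every minimizing sequence has a subsequence which, after suitable
translations, converges strongly in `H¹(ℝ) × H¹(ℝ)` to a minimizer `(φ, ψ)`. -/
theorem minimizing_seq_compact_up_to_translation (α₀ β₀ lam : ℝ)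
    (hα : 0 < α₀) (hβ : 0 < β₀) (hlam : 0 < lam)
    (f g : ℕ → ℝ → ℝ) (hf : ∀ n, InH1 (f n)) (hg : ∀ n, InH1 (g n))
    (hconstr : Tendsto (fun n => ∫ x : ℝ, f n x ^ 2 * g n x) atTop (𝓝 lam))
    (hmin : Tendsto (fun n => Ifun α₀ β₀ (f n) (g n)) atTop (𝓝 (Mfun α₀ β₀ lam))) :
    ∃ (nk : ℕ → ℕ) (y : ℕ → ℝ) (φ ψ : ℝ → ℝ), StrictMono nk ∧
      InH1 φ ∧ InH1 ψ ∧ (∫ x : ℝ, φ x ^ 2 * ψ x) = lam ∧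
      Ifun α₀ β₀ φ ψ = Mfun α₀ β₀ lam ∧
      Tendsto (fun k => ∫ x : ℝ, (f (nk k) (x + y k) - φ x) ^ 2) atTop (𝓝 0) ∧
      Tendsto (fun k => ∫ x : ℝ, (deriv (f (nk k)) (x + y k) - deriv φ x) ^ 2) atTop (𝓝 0) ∧
      Tendsto (fun k => ∫ x : ℝ, (g (nk k) (x + y k) - ψ x) ^ 2) atTop (𝓝 0) ∧
      Tendsto (fun k => ∫ x : ℝ, (deriv (g (nk k)) (x + y k) - deriv ψ x) ^ 2) atTop (𝓝 0) :=
  minimizing_seq_compact_up_to_translation_general α₀ β₀ lam hα hβ f g hf hg hconstr hmin
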